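/- Let Σ be the fan of the Hirzebruch surface F_a, a ≥ 2, with primitive ray generators (1,0), (0,1), (−1,a), (0,−1) in ℤ^2. Then the fan Σ_C obtained by adding the rays through (−1,0) and (1,−a) is complete and centrally symmetric but not smooth; after additionally inserting the rays through (1,−ν) for 1 ≤ ν < a, the resulting fan is a smooth complete centrally symmetric fan with 2a rays. -/

import Mathlib

open scoped Classical Pointwise BigOperators

noncomputable section

abbrev Vr (r : ℕ) : Type := Fin r → ℝ

/-- The convex cone generated by a finite set of vectors. -/
def coneGen {M : Type*} [AddCommGroup M] [Module ℝ M] (s : Finset M) : Set M :=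
  { x | ∃ c : M → ℝ, (∀ v, 0 ≤ c v) ∧ x = ∑ v ∈ s, c v • v }

/-- Dimension of the linear span of a set. -/
def spanDim {M : Type*} [AddCommGroup M] [Module ℝ M] (s : Set M) : ℕ :=
  Module.finrank ℝ (Submodule.span ℝ s)

/-- A (linear) hyperplane: the kernel of a nonzero linear functional. -/
def IsHyp {M : Type*} [AddCommGroup M] [Module ℝ M] (H : Set M) : Prop :=
  ∃ f : M →ₗ[ℝ] ℝ, f ≠ 0 ∧ H = {x | f x = 0}

/-- A strongly convex rational polyhedral cone with respect to the lattice `N`. -/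
def IsNCone {r : ℕ} (N : AddSubgroup (Vr r)) (σ : Set (Vr r)) : Prop :=
  ∃ s : Finset (Vr r), ↑s ⊆ (N : Set (Vr r)) ∧ σ = coneGen s ∧ σ ∩ (-σ) ⊆ {0}

/-- `τ` is a face of `σ`. -/
def IsFaceOf {M : Type*} [AddCommGroup M] [Module ℝ M] (τ σ : Set M) : Prop :=
  ∃ m : M →ₗ[ℝ] ℝ, (∀ x ∈ σ, 0 ≤ m x) ∧ τ = σ ∩ {x | m x = 0}

/-- A fan in the lattice `N`. -/
structure IsFan {r : ℕ} (N : AddSubgroup (Vr r)) (F : Set (Set (Vr r))) : Prop where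
  finite : F.Finite
  nonempty : F.Nonempty
  cones : ∀ σ ∈ F, IsNCone N σ
  faces : ∀ σ ∈ F, ∀ τ : Set (Vr r), IsFaceOf τ σ → τ ∈ F
  inter : ∀ σ₁ ∈ F, ∀ σ₂ ∈ F, IsFaceOf (σ₁ ∩ σ₂) σ₁ ∧ IsFaceOf (σ₁ ∩ σ₂) σ₂

/-- Completeness: the support is everything. -/
def FanComplete {M : Type*} (F : Set (Set M)) : Prop := ⋃₀ F = Set.univ

/-- Strong symmetry: complete, and the support of the codimension-one cones is a
finite union of hyperplanes. -/
def SSymm {M : Type*} [AddCommGroup M] [Module ℝ M] (F : Set (Set M)) : Prop :=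
  FanComplete F ∧ ∃ Hs : Finset (Set M), (∀ h ∈ Hs, IsHyp h) ∧
    ⋃₀ {τ ∈ F | spanDim τ = Module.finrank ℝ M - 1} = ⋃₀ ↑Hs

/-- Central symmetry. -/
def CSymm {M : Type*} [AddCommGroup M] (F : Set (Set M)) : Prop := ∀ σ ∈ F, -σ ∈ F

/-- `b` is a ℤ-basis of the subgroup `L` of `ℝ^r`. -/
def IsZBasis {r d : ℕ} (L : AddSubgroup (Vr r)) (b : Fin d → Vr r) : Prop :=
  LinearIndependent ℝ b ∧ AddSubgroup.closure (Set.range b) = L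

/-- A (full-rank) lattice in `ℝ^r`. -/
def IsLattice {r : ℕ} (N : AddSubgroup (Vr r)) : Prop :=
  ∃ b : Fin r → Vr r, IsZBasis N b

/-- A cone generated by a part of a ℤ-basis of `L`. -/
def SmoothCone {r : ℕ} (L : AddSubgroup (Vr r)) (σ : Set (Vr r)) : Prop :=
  ∃ (d : ℕ) (b : Fin d → Vr r) (s : Finset (Fin d)),
    IsZBasis L b ∧ σ = coneGen (s.image b)

/-- Chambers of an arrangement: connected components of the complement. -/
def chambers {r : ℕ} (A : Finset (Set (Vr r))) : Set (Set (Vr r)) :=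
  { K | ∃ x ∈ (⋃₀ (A : Set (Set (Vr r))))ᶜ,
      K = connectedComponentIn (⋃₀ (A : Set (Set (Vr r))))ᶜ x }

/-- An open simplicial cone of full dimension. -/
def IsOpenSimplicialCone {r : ℕ} (K : Set (Vr r)) : Prop :=
  ∃ b : Fin r → Vr r, LinearIndependent ℝ b ∧
    K = { x | ∃ c : Fin r → ℝ, (∀ i, 0 < c i) ∧ x = ∑ i, c i • b i }

def ker0 {r : ℕ} (α : Vr r →ₗ[ℝ] ℝ) : Set (Vr r) := {x | α x = 0}

/-- Walls of a chamber `K`. -/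
def walls {r : ℕ} (A : Finset (Set (Vr r))) (K : Set (Vr r)) : Set (Set (Vr r)) :=
  { H | H ∈ A ∧ spanDim (H ∩ closure K) = r - 1 }

/-- The set `B^K` of inward-pointing normals of the walls of `K`. -/
def BK {r : ℕ} (A : Finset (Set (Vr r))) (R : Finset (Vr r →ₗ[ℝ] ℝ)) (K : Set (Vr r)) :
    Finset (Vr r →ₗ[ℝ] ℝ) :=
  R.filter (fun α => ker0 α ∈ walls A K ∧ K ⊆ {x | 0 ≤ α x})

/-- A crystallographic arrangement `(A, R)`. -/
structure IsCrystArr {r : ℕ} (A : Finset (Set (Vr r))) (R : Finset (Vr r →ₗ[ℝ] ℝ)) : Prop where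
  simplicial : ∀ K ∈ chambers A, IsOpenSimplicialCone K
  hyps : (A : Set (Set (Vr r))) = (fun α => ker0 α) '' (R : Set (Vr r →ₗ[ℝ] ℝ))
  nonzero : ∀ α ∈ R, α ≠ 0
  neg_mem : ∀ α ∈ R, -α ∈ R
  reduced : ∀ α ∈ R, ∀ β ∈ R, (∃ c : ℝ, β = c • α) → β = α ∨ β = -α
  integral : ∀ K ∈ chambers A, ∀ β ∈ R,
    β ∈ Submodule.span ℤ ((BK A R K : Set (Vr r →ₗ[ℝ] ℝ)))

/-- The set of all intersections of closed chambers of `A`. -/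
def closedChamberInts {r : ℕ} (A : Finset (Set (Vr r))) : Set (Set (Vr r)) :=
  { σ | ∃ S : Set (Set (Vr r)), S.Nonempty ∧ S ⊆ chambers A ∧ σ = ⋂₀ (closure '' S) }

/-- The lattice dual to `M_R = ∑_{α ∈ R} ℤ α`. -/
def dualLattice {r : ℕ} (R : Finset (Vr r →ₗ[ℝ] ℝ)) : AddSubgroup (Vr r) where
  carrier := { x | ∀ α ∈ R, ∃ k : ℤ, α x = k }
  zero_mem' := fun α _ => ⟨0, by simp⟩
  add_mem' := by
    intro x y hx hy α hα
    obtain ⟨k, hk⟩ := hx α hα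
    obtain ⟨m, hm⟩ := hy α hα
    exact ⟨k + m, by simp [hk, hm]⟩
  neg_mem' := by
    intro x hx α hα
    obtain ⟨k, hk⟩ := hx α hα
    exact ⟨-k, by simp [hk]⟩

/-- The star fan of `δ`, as a collection of cones in the quotient by `E`. -/
def starAt {r : ℕ} (F : Set (Set (Vr r))) (δ : Set (Vr r)) (E : Submodule ℝ (Vr r)) :
    Set (Set (Vr r ⧸ E)) :=
  { τ | ∃ σ ∈ F, δ ⊆ σ ∧ τ = E.mkQ '' σ }

/-- The positive roots `R_+^K` at the chamber `K`. -/
def RplusF {r : ℕ} (A : Finset (Set (Vr r))) (R : Finset (Vr r →ₗ[ℝ] ℝ)) (K : Set (Vr r)) :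
    Finset (Vr r →ₗ[ℝ] ℝ) :=
  R.filter (fun α => α ∈ coneGen (BK A R K))

/-- `ρ^K`, the half-sum of the positive roots at `K`. -/
def rhoK {r : ℕ} (A : Finset (Set (Vr r))) (R : Finset (Vr r →ₗ[ℝ] ℝ)) (K : Set (Vr r)) :
    Vr r →ₗ[ℝ] ℝ :=
  (1/2 : ℝ) • ∑ α ∈ RplusF A R K, α

end

/-- The fan determined by a cyclic list of ray generators: the zero cone, the rays,
and the two-dimensional cones spanned by circularly adjacent rays. -/
def fanOfList (L : List (Vr 2)) : Set (Set (Vr 2)) :=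
  {({0} : Set (Vr 2))} ∪
  { s | ∃ i : Fin L.length, s = coneGen ({L.get i} : Finset (Vr 2)) } ∪
  { s | ∃ i : Fin L.length,
      s = coneGen ({L.get i, L.get ⟨(i.1 + 1) % L.length, Nat.mod_lt _ i.pos⟩} :
        Finset (Vr 2)) }

/-- The standard lattice ℤ² ⊆ ℝ². -/
def stdLat : AddSubgroup (Vr 2) :=
  AddSubgroup.closure (Set.range fun i : Fin 2 => (Pi.single i 1 : Vr 2))

/-- The rays of the centrally symmetric completion `Σ_C` of the Hirzebruch fan. -/
def hirzC (a : ℕ) : List (Vr 2) :=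
  [![1, 0], ![0, 1], ![-1, (a : ℝ)], ![-1, 0], ![0, -1], ![1, -(a : ℝ)]]

/-- The rays of the desingularization: additionally the rays through `(1, −ν)` and
`(−1, ν)` for `1 ≤ ν < a`, in counterclockwise order. -/
def hirzFull (a : ℕ) : List (Vr 2) :=
  [![1, 0], ![0, 1]] ++
  ((List.range a).map fun k => ![-1, ((a - k : ℕ) : ℝ)]) ++
  [![-1, 0], ![0, -1]] ++
  ((List.range a).map fun k => ![1, -(((a - k : ℕ) : ℝ))])

/-!
A cyclic sequence of plane vectors `w i` with `w (i + m) = -w i` that turns counterclockwise spans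
a complete centrally symmetric fan: any two of its cones are separated by a line through the
origin, and `det (w i, x)` changes sign in `i` within half a turn, which locates `x` in a cone.
A lattice cone is smooth when the determinant of its generators is `1`. Conversely the rays of a
smooth cone carry a part of a lattice basis, so primitive generators `u`, `v` cannot have
`(u + c • v) / n` in the lattice for any `n ≥ 2`; the cone of `(-1, a)` and `(-1, 0)` in `Σ_C`
fails this with `n = a`. Inserting the rays `±(1, -ν)` makes all adjacent determinants `1`.
-/

section LinearFunctionals

variable {K V ι : Type*} [Field K] [AddCommGroup V] [Module K V]

lemma exists_linearMap_apply_eq_of_linearIndependent {b : ι → V} (hb : LinearIndependent K b)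
    (g : ι → K) : ∃ f : V →ₗ[K] K, ∀ i, f (b i) = g i := by
  obtain ⟨f, hf⟩ := ((Module.Basis.span hb).constr K g).exists_extend
  refine ⟨f, fun i ↦ ?_⟩
  rw [← (Module.Basis.span hb).constr_basis K g i, ← hf, LinearMap.comp_apply,
    Submodule.subtype_apply, Module.Basis.span_apply]

lemma exists_linearMap_eqOn_of_linearIndepOn {s : Set V} (hs : LinearIndepOn K id s)
    (g : V → K) : ∃ f : V →ₗ[K] K, ∀ v ∈ s, f v = g v := by
  obtain ⟨f, hf⟩ := exists_linearMap_apply_eq_of_linearIndependent hs fun i ↦ g i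
  exact ⟨f, fun x hx ↦ hf ⟨x, hx⟩⟩

end LinearFunctionals

section Cones

variable {M : Type*} [AddCommGroup M] [Module ℝ M] {s t g : Finset M} {τ : Set M}

lemma coneGen_eq_hull (s : Finset M) : coneGen s = (PointedCone.hull ℝ (s : Set M) : Set M) := by
  ext x
  rw [SetLike.mem_coe, PointedCone.hull, Submodule.mem_span_finset]
  constructor
  · rintro ⟨c, hc, rfl⟩
    refine ⟨fun v ↦ if v ∈ s then ⟨c v, hc v⟩ else 0, fun v hv ↦ ?_, ?_⟩
    · by_contra hvs
      exact hv (if_neg hvs)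
    · exact Finset.sum_congr rfl fun v hv ↦ by simp only [if_pos hv]; rfl
  · rintro ⟨c, -, rfl⟩
    exact ⟨fun v ↦ c v, fun v ↦ (c v).2, rfl⟩

lemma subset_coneGen (s : Finset M) : ↑s ⊆ coneGen s :=
  coneGen_eq_hull s ▸ PointedCone.subset_hull

lemma coneGen_mono (h : s ⊆ t) : coneGen s ⊆ coneGen t := by
  rw [coneGen_eq_hull, coneGen_eq_hull]
  exact Submodule.span_mono h

lemma coneGen_empty : coneGen (∅ : Finset M) = {0} := by
  simp [coneGen_eq_hull, PointedCone.hull]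

lemma mem_coneGen_pair [DecidableEq M] {u v x : M} :
    x ∈ coneGen {u, v} ↔ ∃ c d : ℝ, 0 ≤ c ∧ 0 ≤ d ∧ c • u + d • v = x := by
  rw [coneGen_eq_hull, SetLike.mem_coe, PointedCone.hull, Finset.coe_pair,
    Submodule.mem_span_pair]
  constructor
  · rintro ⟨c, d, h⟩
    exact ⟨c, d, c.2, d.2, h⟩
  · rintro ⟨c, d, hc, hd, h⟩
    exact ⟨⟨c, hc⟩, ⟨d, hd⟩, h⟩

lemma mem_coneGen_singleton {u x : M} : x ∈ coneGen {u} ↔ ∃ c : ℝ, 0 ≤ c ∧ c • u = x := by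
  rw [coneGen_eq_hull, SetLike.mem_coe, PointedCone.hull, Finset.coe_singleton,
    Submodule.mem_span_singleton]
  constructor
  · rintro ⟨c, h⟩
    exact ⟨c, c.2, h⟩
  · rintro ⟨c, hc, h⟩
    exact ⟨⟨c, hc⟩, h⟩

lemma coneGen_neg [DecidableEq M] (s : Finset M) : coneGen (-s) = -coneGen s := by
  rw [coneGen_eq_hull, coneGen_eq_hull, Finset.coe_neg, PointedCone.hull,
    Submodule.span_neg_eq_neg, Submodule.coe_set_neg]

lemma span_coneGen (s : Finset M) :
    Submodule.span ℝ (coneGen s) = Submodule.span ℝ (s : Set M) := by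
  rw [coneGen_eq_hull, PointedCone.hull, Submodule.span_span_of_tower]

lemma spanDim_coneGen (hs : LinearIndepOn ℝ id (s : Set M)) : spanDim (coneGen s) = s.card := by
  rw [spanDim, span_coneGen, finrank_span_finset_eq_card hs]

lemma nonneg_of_mem_coneGen {f : M →ₗ[ℝ] ℝ} (hf : ∀ v ∈ s, 0 ≤ f v) {x : M}
    (hx : x ∈ coneGen s) : 0 ≤ f x := by
  obtain ⟨c, hc, rfl⟩ := hx
  simp only [map_sum, map_smul, smul_eq_mul]
  exact Finset.sum_nonneg fun v hv ↦ mul_nonneg (hc v) (hf v hv)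

lemma coneGen_inter_ker {f : M →ₗ[ℝ] ℝ} (hf : ∀ v ∈ s, 0 ≤ f v) :
    coneGen s ∩ {x | f x = 0} = coneGen (s.filter (f · = 0)) := by
  ext x
  constructor
  · rintro ⟨⟨c, hc, rfl⟩, hx⟩
    refine ⟨c, hc, (Finset.sum_filter_of_ne fun v hv hne ↦ ?_).symm⟩
    have hterm : c v * f v = 0 := by
      simp only [Set.mem_ofPred_eq, map_sum, map_smul, smul_eq_mul] at hx
      exact (Finset.sum_eq_zero_iff_of_nonneg
        fun v hv ↦ mul_nonneg (hc v) (hf v hv)).1 hx v hv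
    exact (mul_eq_zero.1 hterm).resolve_left fun hcv ↦ hne (by rw [hcv, zero_smul])
  · intro hx
    refine ⟨coneGen_mono (Finset.filter_subset _ _) hx, ?_⟩
    obtain ⟨c, -, rfl⟩ := hx
    simp only [Set.mem_ofPred_eq, map_sum, map_smul]
    exact Finset.sum_eq_zero fun v hv ↦ by rw [(Finset.mem_filter.1 hv).2, smul_zero]

lemma coneGen_inter_subset_of_separates [DecidableEq M] (f : M →ₗ[ℝ] ℝ) (hs : ∀ v ∈ s, 0 ≤ f v)
    (ht : ∀ v ∈ t, f v ≤ 0) (hst : ∀ v ∈ s, f v = 0 → v ∈ t) :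
    coneGen s ∩ coneGen t ⊆ coneGen (s ∩ t) := by
  rintro x ⟨hxs, hxt⟩
  have hfx : f x = 0 := by
    refine le_antisymm ?_ (nonneg_of_mem_coneGen hs hxs)
    exact neg_nonneg.1 (nonneg_of_mem_coneGen (f := -f) (by simpa using ht) hxt)
  have hx : x ∈ coneGen (s.filter (f · = 0)) := coneGen_inter_ker hs ▸ ⟨hxs, hfx⟩
  refine coneGen_mono (fun v hv ↦ ?_) hx
  obtain ⟨hvs, hfv⟩ := Finset.mem_filter.1 hv
  exact Finset.mem_inter.2 ⟨hvs, hst v hvs hfv⟩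

lemma IsFaceOf.exists_eq_coneGen (h : IsFaceOf τ (coneGen s)) : ∃ t ⊆ s, τ = coneGen t := by
  obtain ⟨f, hf, rfl⟩ := h
  exact ⟨_, Finset.filter_subset _ _,
    coneGen_inter_ker fun v hv ↦ hf v (subset_coneGen s hv)⟩

lemma isFaceOf_coneGen_of_subset (hs : LinearIndepOn ℝ id (s : Set M)) (hts : t ⊆ s) :
    IsFaceOf (coneGen t) (coneGen s) := by
  obtain ⟨f, hf⟩ := exists_linearMap_eqOn_of_linearIndepOn hs fun v ↦ if v ∈ t then 0 else 1
  have hnonneg : ∀ v ∈ s, 0 ≤ f v := fun v hv ↦ by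
    rw [hf v hv]
    positivity
  refine ⟨f, fun x hx ↦ nonneg_of_mem_coneGen hnonneg hx, ?_⟩
  rw [coneGen_inter_ker hnonneg]
  congr 1
  ext v
  rw [Finset.mem_filter]
  constructor
  · exact fun hv ↦ ⟨hts hv, by rw [hf v (hts hv), if_pos hv]⟩
  · rintro ⟨hvs, hfv⟩
    by_contra hvt
    simp [hf v hvs, hvt] at hfv

lemma coneGen_inter_of_subset [DecidableEq M] (hg : LinearIndepOn ℝ id (g : Set M)) (hs : s ⊆ g)
    (ht : t ⊆ g) : coneGen s ∩ coneGen t = coneGen (s ∩ t) := by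
  refine Set.Subset.antisymm ?_ (Set.subset_inter (coneGen_mono Finset.inter_subset_left)
    (coneGen_mono Finset.inter_subset_right))
  obtain ⟨f, hf⟩ := exists_linearMap_eqOn_of_linearIndepOn hg fun v ↦ if v ∈ t then 0 else 1
  refine coneGen_inter_subset_of_separates f (fun v hv ↦ ?_) (fun v hv ↦ ?_) fun v hv hfv ↦ ?_
  · rw [hf v (hs hv)]
    positivity
  · rw [hf v (ht hv), if_pos hv]
  · by_contra hvt
    simp [hf v (hs hv), hvt] at hfv

lemma coneGen_inter_neg_subset (hs : LinearIndepOn ℝ id (s : Set M)) :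
    coneGen s ∩ -coneGen s ⊆ {0} := by
  rintro x ⟨hx, hnx⟩
  obtain ⟨f, hf, hzero⟩ := isFaceOf_coneGen_of_subset hs (Finset.empty_subset s)
  rw [← coneGen_empty, hzero]
  refine ⟨hx, le_antisymm ?_ (hf x hx)⟩
  simpa using hf (-x) hnx

end Cones

section SimplicialFans

/-- The simplicial fan spanned by a set `S` of generator sets: the cones over all subsets of
members of `S`. -/
def simplicialFan {M : Type*} [AddCommGroup M] [Module ℝ M] (S : Set (Finset M)) :
    Set (Set M) :=
  {σ | ∃ s ∈ S, ∃ t ⊆ s, σ = coneGen t}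

/-- A set of generator sets whose cones are simplicial and pairwise meet in the cone over their
common generators, so that `simplicialFan S` is a fan once `S` is finite. -/
structure IsSimplicialSystem {M : Type*} [AddCommGroup M] [Module ℝ M] [DecidableEq M]
    (S : Set (Finset M)) : Prop where
  linearIndepOn : ∀ s ∈ S, LinearIndepOn ℝ id (s : Set M)
  inter_subset : ∀ s ∈ S, ∀ t ∈ S, coneGen s ∩ coneGen t ⊆ coneGen (s ∩ t)

variable {M : Type*} [AddCommGroup M] [Module ℝ M] {S : Set (Finset M)}
  {s s₁ s₂ t t₁ t₂ : Finset M}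

lemma coneGen_mem_simplicialFan (hs : s ∈ S) (hts : t ⊆ s) : coneGen t ∈ simplicialFan S :=
  ⟨s, hs, t, hts, rfl⟩

lemma finite_simplicialFan (hS : S.Finite) : (simplicialFan S).Finite := by
  refine (hS.biUnion fun s _ ↦ s.powerset.finite_toSet.image coneGen).subset ?_
  rintro σ ⟨s, hs, t, hts, rfl⟩
  exact Set.mem_biUnion hs ⟨t, Finset.mem_coe.2 (Finset.mem_powerset.2 hts), rfl⟩

lemma fanComplete_simplicialFan (hS : ∀ x, ∃ s ∈ S, x ∈ coneGen s) :
    FanComplete (simplicialFan S) := by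
  refine Set.eq_univ_of_forall fun x ↦ ?_
  obtain ⟨s, hs, hx⟩ := hS x
  exact ⟨coneGen s, coneGen_mem_simplicialFan hs subset_rfl, hx⟩

lemma cSymm_simplicialFan [DecidableEq M] (hS : ∀ s ∈ S, -s ∈ S) : CSymm (simplicialFan S) := by
  rintro _ ⟨s, hs, t, hts, rfl⟩
  rw [← coneGen_neg]
  exact coneGen_mem_simplicialFan (hS s hs) (Finset.neg_subset_neg hts)

lemma smoothCone_of_mem_simplicialFan {r : ℕ} {L : AddSubgroup (Vr r)}
    {S : Set (Finset (Vr r))}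
    (hS : ∀ s ∈ S, ∃ (d : ℕ) (b : Fin d → Vr r), IsZBasis L b ∧ (s : Set (Vr r)) ⊆ Set.range b)
    {σ : Set (Vr r)} (hσ : σ ∈ simplicialFan S) : SmoothCone L σ := by
  obtain ⟨s, hs, t, hts, rfl⟩ := hσ
  obtain ⟨d, b, hb, hsb⟩ := hS s hs
  obtain ⟨t', ht'⟩ : ∃ t' : Finset (Fin d), t'.image b = t := by
    have hrange : (t : Set (Vr r)) ⊆ b '' Set.univ := by
      rw [Set.image_univ]
      exact (Finset.coe_subset.2 hts).trans hsb
    obtain ⟨t', -, ht'⟩ := Finset.subset_set_image_iff.1 hrange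
    exact ⟨t', ht'⟩
  exact ⟨d, b, t', hb, by rw [ht']⟩

namespace IsSimplicialSystem

variable [DecidableEq M]

lemma coneGen_inter (hS : IsSimplicialSystem S) (hs₁ : s₁ ∈ S) (hs₂ : s₂ ∈ S) (ht₁ : t₁ ⊆ s₁)
    (ht₂ : t₂ ⊆ s₂) : coneGen t₁ ∩ coneGen t₂ = coneGen (t₁ ∩ t₂) := by
  refine Set.Subset.antisymm ?_ (Set.subset_inter (coneGen_mono Finset.inter_subset_left)
    (coneGen_mono Finset.inter_subset_right))
  rintro x ⟨hx₁, hx₂⟩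
  have hx : x ∈ coneGen (s₁ ∩ s₂) :=
    hS.inter_subset s₁ hs₁ s₂ hs₂ ⟨coneGen_mono ht₁ hx₁, coneGen_mono ht₂ hx₂⟩
  have hx₁' : x ∈ coneGen (t₁ ∩ (s₁ ∩ s₂)) := by
    rw [← coneGen_inter_of_subset (hS.linearIndepOn s₁ hs₁) ht₁ Finset.inter_subset_left]
    exact ⟨hx₁, hx⟩
  have hsub : t₁ ∩ (s₁ ∩ s₂) ⊆ s₂ := Finset.inter_subset_right.trans Finset.inter_subset_right
  have hx₁₂ : x ∈ coneGen (t₁ ∩ (s₁ ∩ s₂) ∩ t₂) := by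
    rw [← coneGen_inter_of_subset (hS.linearIndepOn s₂ hs₂) hsub ht₂]
    exact ⟨hx₁', hx₂⟩
  exact coneGen_mono (Finset.inter_subset_inter_right Finset.inter_subset_left) hx₁₂

theorem isFan {r : ℕ} {N : AddSubgroup (Vr r)} {S : Set (Finset (Vr r))}
    (hS : IsSimplicialSystem S) (hfin : S.Finite) (hne : S.Nonempty)
    (hN : ∀ s ∈ S, (s : Set (Vr r)) ⊆ N) : IsFan N (simplicialFan S) where
  finite := finite_simplicialFan hfin
  nonempty := by
    obtain ⟨s, hs⟩ := hne
    exact ⟨coneGen s, coneGen_mem_simplicialFan hs subset_rfl⟩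
  cones := by
    rintro _ ⟨s, hs, t, hts, rfl⟩
    exact ⟨t, (Finset.coe_subset.2 hts).trans (hN s hs), rfl,
      coneGen_inter_neg_subset ((hS.linearIndepOn s hs).mono hts)⟩
  faces := by
    rintro _ ⟨s, hs, t, hts, rfl⟩ τ hτ
    obtain ⟨t', ht', rfl⟩ := hτ.exists_eq_coneGen
    exact coneGen_mem_simplicialFan hs (ht'.trans hts)
  inter := by
    rintro _ ⟨s₁, hs₁, t₁, ht₁, rfl⟩ _ ⟨s₂, hs₂, t₂, ht₂, rfl⟩
    rw [hS.coneGen_inter hs₁ hs₂ ht₁ ht₂]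
    exact ⟨isFaceOf_coneGen_of_subset ((hS.linearIndepOn s₁ hs₁).mono ht₁)
        Finset.inter_subset_left,
      isFaceOf_coneGen_of_subset ((hS.linearIndepOn s₂ hs₂).mono ht₂)
        Finset.inter_subset_right⟩

lemma coneGen_singleton_injOn (hS : IsSimplicialSystem S) :
    Set.InjOn (fun u ↦ coneGen {u}) (⋃ s ∈ S, (s : Set M)) := by
  intro u hu v hv (huv : coneGen {u} = coneGen {v})
  simp only [Set.mem_iUnion₂, Finset.mem_coe, exists_prop] at hu hv
  obtain ⟨s, hs, hus⟩ := hu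
  obtain ⟨t, ht, hvt⟩ := hv
  by_contra hne
  have hmem : u ∈ coneGen ({u} ∩ {v}) := by
    rw [← hS.coneGen_inter hs ht (Finset.singleton_subset_iff.2 hus)
      (Finset.singleton_subset_iff.2 hvt), ← huv, Set.inter_self]
    exact subset_coneGen _ (Finset.mem_singleton_self u)
  rw [Finset.singleton_inter_of_notMem (Finset.notMem_singleton.2 hne), coneGen_empty] at hmem
  exact (hS.linearIndepOn s hs).ne_zero hus hmem

theorem ncard_rays (hS : IsSimplicialSystem S) :
    {σ ∈ simplicialFan S | spanDim σ = 1}.ncard = (⋃ s ∈ S, (s : Set M)).ncard := by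
  rw [← hS.coneGen_singleton_injOn.ncard_image]
  congr 1
  ext σ
  simp only [Set.mem_image, Set.mem_iUnion₂, Finset.mem_coe, exists_prop]
  constructor
  · rintro ⟨⟨s, hs, t, hts, rfl⟩, hdim⟩
    rw [spanDim_coneGen ((hS.linearIndepOn s hs).mono hts)] at hdim
    obtain ⟨u, rfl⟩ := Finset.card_eq_one.1 hdim
    exact ⟨u, ⟨s, hs, Finset.singleton_subset_iff.1 hts⟩, rfl⟩
  · rintro ⟨u, ⟨s, hs, hus⟩, rfl⟩
    have hsub : {u} ⊆ s := Finset.singleton_subset_iff.2 hus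
    exact ⟨coneGen_mem_simplicialFan hs hsub, by
      rw [spanDim_coneGen ((hS.linearIndepOn s hs).mono hsub), Finset.card_singleton]⟩

end IsSimplicialSystem

end SimplicialFans

section SmoothCones

variable {r d : ℕ} {L : AddSubgroup (Vr r)} {b : Fin d → Vr r} {u v : Vr r}

/-- A primitive vector of a subgroup `L` of `ℝ^r`: a member of `L` that is no proper multiple of
a member of `L`. In particular it is nonzero. -/
def IsPrimitive (L : AddSubgroup (Vr r)) (u : Vr r) : Prop :=
  u ∈ L ∧ ∀ x ∈ L, ∀ n : ℤ, 0 ≤ n → u = n • x → n = 1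

lemma IsZBasis.mem (hb : IsZBasis L b) (i : Fin d) : b i ∈ L :=
  hb.2 ▸ AddSubgroup.subset_closure (Set.mem_range_self i)

lemma IsZBasis.exists_coord (hb : IsZBasis L b) (i : Fin d) :
    ∃ f : Vr r →ₗ[ℝ] ℝ, (∀ x ∈ L, ∃ n : ℤ, f x = n) ∧ f (b i) = 1 ∧ ∀ j ≠ i, f (b j) = 0 := by
  obtain ⟨f, hf⟩ := exists_linearMap_apply_eq_of_linearIndependent hb.1 (Pi.single i 1)
  refine ⟨f, fun x hx ↦ ?_, by simp [hf], fun j hj ↦ by simp [hf, hj]⟩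
  have hle : AddSubgroup.closure (Set.range b) ≤
      (Int.castAddHom ℝ).range.comap f.toAddMonoidHom := by
    rw [AddSubgroup.closure_le]
    rintro _ ⟨j, rfl⟩
    obtain rfl | hj := eq_or_ne j i
    · exact ⟨1, by simp [hf]⟩
    · exact ⟨0, by simp [hf, hj]⟩
  obtain ⟨n, hn⟩ := hle (hb.2.symm ▸ hx)
  exact ⟨n, hn.symm⟩

lemma exists_mem_coneGen_singleton_eq {M : Type*} [AddCommGroup M] [Module ℝ M] {s t : Finset M}
    (hs : LinearIndepOn ℝ id (s : Set M)) (ht : LinearIndepOn ℝ id (t : Set M))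
    (hst : coneGen s = coneGen t) {u : M} (hu : u ∈ s) : ∃ v ∈ t, coneGen {u} = coneGen {v} := by
  have hus : {u} ⊆ s := Finset.singleton_subset_iff.2 hu
  have hface : IsFaceOf (coneGen {u}) (coneGen t) := hst ▸ isFaceOf_coneGen_of_subset hs hus
  obtain ⟨t', ht', heq⟩ := hface.exists_eq_coneGen
  have hcard : t'.card = 1 := by
    rw [← spanDim_coneGen (ht.mono ht'), ← heq, spanDim_coneGen (hs.mono hus),
      Finset.card_singleton]
  obtain ⟨v, rfl⟩ := Finset.card_eq_one.1 hcard
  exact ⟨v, Finset.singleton_subset_iff.1 ht', heq⟩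

lemma IsZBasis.eq_of_isPrimitive (hb : IsZBasis L b) {i : Fin d} (hu : IsPrimitive L u)
    (hui : u ∈ coneGen {b i}) : u = b i := by
  obtain ⟨c, hc, rfl⟩ := mem_coneGen_singleton.1 hui
  obtain ⟨f, hfL, hfi, -⟩ := hb.exists_coord i
  obtain ⟨n, hn⟩ := hfL _ hu.1
  obtain rfl : c = n := by simpa [hfi] using hn
  have hn1 : n = 1 :=
    hu.2 (b i) (hb.mem i) n (by exact_mod_cast hc) (Int.cast_smul_eq_zsmul ℝ n (b i))
  rw [hn1, Int.cast_one, one_smul]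

theorem SmoothCone.exists_isZBasis {s : Finset (Vr r)} (h : SmoothCone L (coneGen s))
    (hs : LinearIndepOn ℝ id (s : Set (Vr r))) (hprim : ∀ u ∈ s, IsPrimitive L u) :
    ∃ (d : ℕ) (b : Fin d → Vr r), IsZBasis L b ∧ (s : Set (Vr r)) ⊆ Set.range b := by
  obtain ⟨d, b, t, hb, hst⟩ := h
  refine ⟨d, b, hb, fun u hu ↦ ?_⟩
  have ht : LinearIndepOn ℝ id ((t.image b : Finset (Vr r)) : Set (Vr r)) := by
    refine hb.1.linearIndepOn_id.mono ?_
    rw [Finset.coe_image]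
    exact Set.image_subset_range b t
  obtain ⟨v, hv, huv⟩ := exists_mem_coneGen_singleton_eq hs ht hst hu
  obtain ⟨i, -, rfl⟩ := Finset.mem_image.1 hv
  have hui : u ∈ coneGen {b i} := huv ▸ subset_coneGen {u} (Finset.mem_singleton_self u)
  exact ⟨i, (hb.eq_of_isPrimitive (hprim u hu) hui).symm⟩

/-- Otherwise the coordinate of `x` along `u` in a basis through `u` and `v` would be `1 / n`. -/
lemma not_smoothCone_coneGen_pair (huv : LinearIndependent ℝ ![u, v]) (hu : IsPrimitive L u)
    (hv : IsPrimitive L v) {x : Vr r} (hx : x ∈ L) {n : ℕ} (hn : 2 ≤ n) {c : ℝ}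
    (hxuv : (n : ℝ) • x = u + c • v) : ¬ SmoothCone L (coneGen {u, v}) := by
  intro hsmooth
  have hne : u ≠ v := fun h ↦ by simpa using huv.injective.ne zero_ne_one h
  have hs : LinearIndepOn ℝ id (({u, v} : Finset (Vr r)) : Set (Vr r)) := by
    simpa [Set.pair_comm] using huv.linearIndepOn_id
  obtain ⟨d, b, hb, hsub⟩ := hsmooth.exists_isZBasis hs (by simp [hu, hv])
  obtain ⟨i, rfl⟩ := hsub (show u ∈ _ by simp)
  obtain ⟨j, rfl⟩ := hsub (show v ∈ _ by simp)
  obtain ⟨f, hfL, hfi, hfj⟩ := hb.exists_coord i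
  obtain ⟨k, hk⟩ := hfL x hx
  have hji : j ≠ i := fun h ↦ hne (h ▸ rfl)
  have hnk : (n : ℤ) * k = 1 := by
    have hfx := congrArg f hxuv
    simp only [map_smul, map_add, hk, hfi, hfj j hji, smul_eq_mul, mul_zero, add_zero] at hfx
    exact_mod_cast hfx
  have hn1 := Int.eq_one_or_neg_one_of_mul_eq_one hnk
  omega

end SmoothCones

section PlanarDet

variable {u v x : Vr 2}

/-- The determinant of a pair of plane vectors as a bilinear form: it is positive when the turn
from `u` to `v` is counterclockwise by less than `π`. -/
def planarDet : Vr 2 →ₗ[ℝ] Vr 2 →ₗ[ℝ] ℝ :=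
  LinearMap.mk₂ ℝ (fun u v ↦ u 0 * v 1 - u 1 * v 0)
    (fun _ _ _ ↦ by simp only [Pi.add_apply]; ring)
    (fun _ _ _ ↦ by simp only [Pi.smul_apply, smul_eq_mul]; ring)
    (fun _ _ _ ↦ by simp only [Pi.add_apply]; ring)
    (fun _ _ _ ↦ by simp only [Pi.smul_apply, smul_eq_mul]; ring)

lemma planarDet_apply (u v : Vr 2) : planarDet u v = u 0 * v 1 - u 1 * v 0 := rfl

lemma isAlt_planarDet : planarDet.IsAlt := fun u ↦ by rw [planarDet_apply]; ring

lemma planarDet_smul (u v x : Vr 2) :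
    planarDet u v • x = planarDet x v • u + planarDet u x • v := by
  ext i
  fin_cases i <;> simp [planarDet_apply] <;> ring

lemma linearIndependent_pair_of_planarDet_ne_zero (h : planarDet u v ≠ 0) :
    LinearIndependent ℝ ![u, v] := by
  refine LinearIndependent.pair_iff.2 fun c d hcd ↦ ⟨?_, ?_⟩
  · have hc : planarDet (c • u + d • v) v = 0 := by rw [hcd, map_zero, LinearMap.zero_apply]
    simpa [isAlt_planarDet.self_eq_zero, h] using hc
  · have hd : planarDet u (c • u + d • v) = 0 := by rw [hcd, map_zero]
    simpa [isAlt_planarDet.self_eq_zero, h] using hd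

lemma mem_coneGen_pair_of_planarDet (huv : 0 < planarDet u v) (hux : 0 ≤ planarDet u x)
    (hvx : planarDet v x ≤ 0) : x ∈ coneGen {u, v} := by
  have hxv : 0 ≤ planarDet x v := by
    rw [← isAlt_planarDet.neg]
    exact neg_nonneg.2 hvx
  refine mem_coneGen_pair.2 ⟨(planarDet u v)⁻¹ * planarDet x v,
    (planarDet u v)⁻¹ * planarDet u x, by positivity, by positivity, ?_⟩
  rw [mul_smul, mul_smul, ← smul_add, ← planarDet_smul, inv_smul_smul₀ huv.ne']

end PlanarDet

section StandardLattice

variable {u v x : Vr 2}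

lemma mem_stdLat : x ∈ stdLat ↔ ∀ i, ∃ n : ℤ, x i = n := by
  constructor
  · intro hx
    induction hx using AddSubgroup.closure_induction with
    | mem x hx =>
      obtain ⟨j, rfl⟩ := hx
      exact fun i ↦ ⟨(Pi.single j 1 : Fin 2 → ℤ) i, by simp [Pi.single_apply]⟩
    | zero => exact fun i ↦ ⟨0, by simp⟩
    | add x y _ _ hx hy =>
      intro i
      obtain ⟨m, hm⟩ := hx i
      obtain ⟨n, hn⟩ := hy i
      exact ⟨m + n, by simp [hm, hn]⟩
    | neg x _ hx =>
      intro i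
      obtain ⟨m, hm⟩ := hx i
      exact ⟨-m, by simp [hm]⟩
  · intro hx
    choose n hn using hx
    have hsum : x = ∑ i, n i • (Pi.single i 1 : Vr 2) := by
      ext j
      simp [hn, Finset.sum_apply, Pi.single_apply]
    rw [hsum]
    exact sum_mem fun i _ ↦
      zsmul_mem (AddSubgroup.subset_closure (Set.mem_range_self i)) (n i)

lemma exists_int_planarDet (hu : u ∈ stdLat) (hv : v ∈ stdLat) : ∃ n : ℤ, planarDet u v = n := by
  choose m hm using mem_stdLat.1 hu
  choose n hn using mem_stdLat.1 hv
  exact ⟨m 0 * n 1 - m 1 * n 0, by rw [planarDet_apply, hm, hm, hn, hn]; push_cast; rfl⟩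

lemma isZBasis_stdLat (hu : u ∈ stdLat) (hv : v ∈ stdLat) (h : planarDet u v = 1) :
    IsZBasis stdLat ![u, v] := by
  refine ⟨linearIndependent_pair_of_planarDet_ne_zero (h ▸ one_ne_zero), le_antisymm ?_ ?_⟩
  · rw [AddSubgroup.closure_le]
    rintro _ ⟨i, rfl⟩
    fin_cases i
    exacts [hu, hv]
  · intro x hx
    obtain ⟨m, hm⟩ := exists_int_planarDet hx hv
    obtain ⟨n, hn⟩ := exists_int_planarDet hu hx
    have hx' : x = m • u + n • v := by
      rw [← Int.cast_smul_eq_zsmul ℝ m, ← Int.cast_smul_eq_zsmul ℝ n, ← hm, ← hn,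
        ← planarDet_smul, h, one_smul]
    rw [hx']
    exact add_mem (zsmul_mem (AddSubgroup.subset_closure (Set.mem_range_self 0)) m)
      (zsmul_mem (AddSubgroup.subset_closure (Set.mem_range_self 1)) n)

lemma isPrimitive_stdLat (hu : u ∈ stdLat) {i : Fin 2} (hi : |u i| = 1) :
    IsPrimitive stdLat u := by
  refine ⟨hu, fun x hx n hn hux ↦ ?_⟩
  obtain ⟨k, hk⟩ := mem_stdLat.1 hx i
  have hnk : |n * k| = 1 := by
    rw [hux, Pi.smul_apply, zsmul_eq_mul, hk] at hi
    exact_mod_cast hi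
  rw [abs_mul] at hnk
  rw [← abs_of_nonneg hn]
  exact Int.eq_one_of_mul_eq_one_right (abs_nonneg n) hnk

end StandardLattice

section AdjacentPairs

lemma range_eq_image_Iio_of_periodic {α : Type*} {f : ℕ → α} {n : ℕ}
    (hf : Function.Periodic f n) (hn : 0 < n) : Set.range f = f '' Set.Iio n := by
  refine (Set.image_subset_range f _).antisymm' ?_
  rintro _ ⟨i, rfl⟩
  exact ⟨i % n, Nat.mod_lt i hn, hf.map_mod_nat i⟩

variable {M : Type*} [DecidableEq M]

/-- The generators of the cone between the `i`-th and the next ray of a sequence of rays. -/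
def adjacentPair (w : ℕ → M) (i : ℕ) : Finset M := {w i, w (i + 1)}

lemma periodic_adjacentPair {w : ℕ → M} {n : ℕ} (hw : Function.Periodic w n) :
    Function.Periodic (adjacentPair w) n := fun i ↦ by
  rw [adjacentPair, adjacentPair, hw, add_right_comm, hw]

lemma neg_adjacentPair [AddGroup M] {w : ℕ → M} {n : ℕ} (hw : Function.Antiperiodic w n)
    (i : ℕ) :
    -adjacentPair w i = adjacentPair w (i + n) := by
  rw [adjacentPair, adjacentPair, hw, add_right_comm, hw, Finset.neg_insert, Finset.neg_singleton]

lemma biUnion_range_adjacentPair (w : ℕ → M) :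
    ⋃ s ∈ Set.range (adjacentPair w), (s : Set M) = Set.range w := by
  rw [Set.biUnion_range]
  refine Set.Subset.antisymm (Set.iUnion_subset fun i ↦ ?_) ?_
  · simp [adjacentPair, Set.insert_subset_iff]
  · rintro _ ⟨i, rfl⟩
    exact Set.mem_iUnion.2 ⟨i, by simp [adjacentPair]⟩

end AdjacentPairs

lemma fanOfList_map_range {w : ℕ → Vr 2} {n : ℕ} (hw : Function.Periodic w n) (hn : 0 < n) :
    fanOfList ((List.range n).map w) = simplicialFan (Set.range (adjacentPair w)) := by
  have hmod (i : ℕ) : i % n < ((List.range n).map w).length := by simpa using Nat.mod_lt i hn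
  ext σ
  constructor
  · rintro ((rfl | ⟨i, rfl⟩) | ⟨i, rfl⟩)
    · exact ⟨_, ⟨0, rfl⟩, ∅, Finset.empty_subset _, coneGen_empty.symm⟩
    · exact ⟨_, ⟨i, rfl⟩, {w i}, by simp [adjacentPair], by simp⟩
    · exact ⟨_, ⟨i, rfl⟩, _, subset_rfl, by simp [adjacentPair, hw.map_mod_nat]⟩
  · rintro ⟨_, ⟨i, rfl⟩, t, ht, rfl⟩
    have hcases : t = ∅ ∨ t = {w i} ∨ t = {w (i + 1)} ∨ t = {w i, w (i + 1)} := by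
      rw [adjacentPair, ← Finset.coe_subset, Finset.coe_pair, Set.subset_pair_iff_eq] at ht
      exact_mod_cast ht
    obtain rfl | rfl | rfl | rfl := hcases
    · exact Or.inl (Or.inl coneGen_empty)
    · exact Or.inl (Or.inr ⟨⟨i % n, hmod i⟩, by simp [hw.map_mod_nat]⟩)
    · exact Or.inl (Or.inr ⟨⟨(i + 1) % n, hmod (i + 1)⟩, by simp [hw.map_mod_nat]⟩)
    · exact Or.inr ⟨⟨i % n, hmod i⟩, by simp [hw.map_mod_nat]⟩

section HalfTurns

lemma exists_nonneg_and_succ_nonpos_of_antiperiodic {g : ℕ → ℝ} {m : ℕ}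
    (hg : Function.Antiperiodic g m) : ∃ k, 0 ≤ g k ∧ g (k + 1) ≤ 0 := by
  by_contra! hpos
  obtain ⟨i, hi⟩ : ∃ i, 0 ≤ g i := by
    obtain h | h := le_total 0 (g 0)
    · exact ⟨0, h⟩
    · exact ⟨0 + m, by rw [hg]; exact neg_nonneg.2 h⟩
  have hnonneg (j : ℕ) : 0 ≤ g (i + j) := by
    induction j with
    | zero => exact hi
    | succ j ih => exact (hpos _ ih).le
  have hlt : g (i + 1 + m) < 0 := by
    rw [hg]
    exact neg_neg_of_pos (hpos i hi)
  rw [add_assoc] at hlt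
  exact hlt.not_ge (hnonneg (1 + m))

/-- A sequence of plane vectors that runs counterclockwise through half a turn in `m` steps and
then repeats with the opposite sign, so that it visits the `2 * m` rays of a centrally symmetric
arrangement in cyclic order. -/
structure IsHalfTurn (m : ℕ) (w : ℕ → Vr 2) : Prop where
  two_le : 2 ≤ m
  antiperiodic : Function.Antiperiodic w m
  det_pos_of_lt : ∀ i j, i < j → j < m → 0 < planarDet (w i) (w j)

lemma periodic_planarDet {w : ℕ → Vr 2} {m : ℕ} (hw : Function.Antiperiodic w m) (k : ℕ) :
    Function.Periodic (fun i ↦ planarDet (w i) (w (i + k))) m := fun i ↦ by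
  simp only [hw i, add_right_comm i m k, hw (i + k), map_neg, LinearMap.neg_apply, neg_neg]

namespace IsHalfTurn

variable {m : ℕ} {w : ℕ → Vr 2}

lemma two_mul_pos (hw : IsHalfTurn m w) : 0 < 2 * m :=
  Nat.mul_pos two_pos (two_pos.trans_le hw.two_le)

lemma periodic (hw : IsHalfTurn m w) : Function.Periodic w (2 * m) :=
  hw.antiperiodic.periodic_two_mul

lemma det_pos (hw : IsHalfTurn m w) {i j : ℕ} (hij : i < j) (hji : j < i + m) :
    0 < planarDet (w i) (w j) := by
  obtain ⟨k, rfl⟩ := Nat.exists_eq_add_of_le hij.le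
  rw [← (periodic_planarDet hw.antiperiodic k).map_mod_nat i]
  have him : i % m < m := Nat.mod_lt i (by omega)
  obtain hlt | hge := lt_or_ge (i % m + k) m
  · exact hw.det_pos_of_lt _ _ (by omega) hlt
  · obtain ⟨l, hl⟩ := Nat.exists_eq_add_of_le' hge
    rw [hl, hw.antiperiodic, map_neg, isAlt_planarDet.neg]
    exact hw.det_pos_of_lt _ _ (by omega) him

lemma det_nonneg (hw : IsHalfTurn m w) {i j : ℕ} (hij : i ≤ j) (hji : j ≤ i + m) :
    0 ≤ planarDet (w i) (w j) := by
  obtain rfl | hij := hij.eq_or_lt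
  · exact (isAlt_planarDet.self_eq_zero _).ge
  obtain rfl | hji := hji.eq_or_lt
  · rw [hw.antiperiodic, map_neg, isAlt_planarDet.self_eq_zero, neg_zero]
  · exact (hw.det_pos hij hji).le

lemma det_succ_pos (hw : IsHalfTurn m w) (i : ℕ) : 0 < planarDet (w i) (w (i + 1)) :=
  hw.det_pos (Nat.lt_succ_self i) (Nat.add_lt_add_left hw.two_le i)

/-- The functional `x ↦ det (x, w (i + 1) + w j)` separates the two cones. -/
lemma coneGen_adjacentPair_inter_subset (hw : IsHalfTurn m w) {i j : ℕ} (hij : i < j)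
    (hji : j ≤ i + m) :
    coneGen (adjacentPair w i) ∩ coneGen (adjacentPair w j) ⊆
      coneGen (adjacentPair w i ∩ adjacentPair w j) := by
  set f : Vr 2 →ₗ[ℝ] ℝ := planarDet.flip (w (i + 1) + w j)
  have hf (x : Vr 2) : f x = planarDet x (w (i + 1)) + planarDet x (w j) :=
    map_add (planarDet x) _ _
  have hfi : 0 < f (w i) := by
    rw [hf]
    exact add_pos_of_pos_of_nonneg (hw.det_succ_pos i) (hw.det_nonneg hij.le hji)
  have hfi' : f (w (i + 1)) = planarDet (w (i + 1)) (w j) := by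
    rw [hf, isAlt_planarDet.self_eq_zero, zero_add]
  have hfj : f (w j) ≤ 0 := by
    rw [hf, isAlt_planarDet.self_eq_zero, add_zero, ← isAlt_planarDet.neg]
    exact neg_nonpos.2 (hw.det_nonneg hij (by omega))
  have hfj' : f (w (j + 1)) ≤ 0 := by
    rw [hf, ← isAlt_planarDet.neg, ← isAlt_planarDet.neg (w j)]
    exact add_nonpos (neg_nonpos.2 (hw.det_nonneg (by omega) (by omega)))
      (neg_nonpos.2 (hw.det_succ_pos j).le)
  refine coneGen_inter_subset_of_separates f ?_ ?_ ?_ <;>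
    simp only [adjacentPair, Finset.forall_mem_insert, Finset.mem_singleton, forall_eq]
  · exact ⟨hfi.le, hfi' ▸ hw.det_nonneg hij (by omega)⟩
  · exact ⟨hfj, hfj'⟩
  · refine ⟨fun h ↦ absurd h hfi.ne', fun h ↦ ?_⟩
    obtain rfl | hlt := (Nat.succ_le_of_lt hij).eq_or_lt
    · exact Finset.mem_insert_self _ _
    · exact absurd (hfi' ▸ h) (hw.det_pos hlt (by omega)).ne'

theorem isSimplicialSystem (hw : IsHalfTurn m w) :
    IsSimplicialSystem (Set.range (adjacentPair w)) where
  linearIndepOn := by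
    rintro _ ⟨i, rfl⟩
    have h := linearIndependent_pair_of_planarDet_ne_zero (hw.det_succ_pos i).ne'
    simpa [adjacentPair, Set.pair_comm] using h.linearIndepOn_id
  inter_subset := by
    rintro _ ⟨i, rfl⟩ _ ⟨j, rfl⟩
    have hperiodic := periodic_adjacentPair hw.periodic
    wlog hij : i ≤ j generalizing i j
    · rw [Set.inter_comm, Finset.inter_comm]
      exact this j i (le_of_not_ge hij)
    obtain ⟨k, rfl⟩ := Nat.exists_eq_add_of_le hij
    have hk : k % (2 * m) < 2 * m := Nat.mod_lt k hw.two_mul_pos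
    have hreduce : adjacentPair w (i + k) = adjacentPair w (i + k % (2 * m)) :=
      ((hperiodic.const_add i).map_mod_nat k).symm
    rw [hreduce]
    obtain hzero | hpos := (k % (2 * m)).eq_zero_or_pos
    · rw [hzero, add_zero, Set.inter_self, Finset.inter_self]
    obtain hle | hgt := le_or_gt (k % (2 * m)) m
    · exact hw.coneGen_adjacentPair_inter_subset (by omega) (by omega)
    · rw [← hperiodic i, Set.inter_comm, Finset.inter_comm]
      exact hw.coneGen_adjacentPair_inter_subset (by omega) (by omega)

lemma exists_mem_coneGen_adjacentPair (hw : IsHalfTurn m w) (x : Vr 2) :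
    ∃ i, x ∈ coneGen (adjacentPair w i) := by
  have hanti : Function.Antiperiodic (fun i ↦ planarDet (w i) x) m := fun i ↦ by
    simp only [hw.antiperiodic i, map_neg, LinearMap.neg_apply]
  obtain ⟨i, hi, hi'⟩ := exists_nonneg_and_succ_nonpos_of_antiperiodic hanti
  exact ⟨i, mem_coneGen_pair_of_planarDet (hw.det_succ_pos i) hi hi'⟩

lemma injOn_Iio (hw : IsHalfTurn m w) : Set.InjOn w (Set.Iio (2 * m)) := by
  have hne {i j : ℕ} (hij : i < j) (hji : j < i + m) : w i ≠ w j := fun h ↦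
    (hw.det_pos hij hji).ne' (by rw [h, isAlt_planarDet.self_eq_zero])
  intro i hi j hj h
  wlog hij : i ≤ j generalizing i j
  · exact (this hj hi h.symm (le_of_not_ge hij)).symm
  by_contra hij'
  obtain hlt | hge := lt_or_ge j (i + m)
  · exact hne (by omega) hlt h
  obtain rfl | hgt := hge.eq_or_lt
  · rw [hw.antiperiodic, self_eq_neg] at h
    exact (hw.det_succ_pos i).ne' (by rw [h, map_zero, LinearMap.zero_apply])
  · rw [← hw.periodic i] at h
    simp only [Set.mem_Iio] at hj
    exact hne (by omega) (by omega) h.symm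

lemma ncard_range (hw : IsHalfTurn m w) : (Set.range w).ncard = 2 * m := by
  rw [range_eq_image_Iio_of_periodic hw.periodic hw.two_mul_pos, hw.injOn_Iio.ncard_image,
    ← Finset.coe_Iio, Set.ncard_coe_finset, Nat.card_Iio]

theorem isFan {N : AddSubgroup (Vr 2)} (hw : IsHalfTurn m w) (hN : ∀ i, w i ∈ N) :
    IsFan N (simplicialFan (Set.range (adjacentPair w))) := by
  refine hw.isSimplicialSystem.isFan ?_ (Set.range_nonempty _) ?_
  · rw [range_eq_image_Iio_of_periodic (periodic_adjacentPair hw.periodic) hw.two_mul_pos]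
    exact (Set.finite_Iio _).image _
  · rintro _ ⟨i, rfl⟩
    simp [adjacentPair, Set.insert_subset_iff, hN]

theorem fanComplete (hw : IsHalfTurn m w) :
    FanComplete (simplicialFan (Set.range (adjacentPair w))) :=
  fanComplete_simplicialFan fun x ↦ by simpa using hw.exists_mem_coneGen_adjacentPair x

theorem cSymm (hw : IsHalfTurn m w) : CSymm (simplicialFan (Set.range (adjacentPair w))) := by
  refine cSymm_simplicialFan ?_
  rintro _ ⟨i, rfl⟩
  exact ⟨i + m, (neg_adjacentPair hw.antiperiodic i).symm⟩

theorem ncard_rays (hw : IsHalfTurn m w) :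
    {σ ∈ simplicialFan (Set.range (adjacentPair w)) | spanDim σ = 1}.ncard = 2 * m := by
  rw [hw.isSimplicialSystem.ncard_rays, biUnion_range_adjacentPair, hw.ncard_range]

end IsHalfTurn

end HalfTurns

section AntiperiodicExtension

variable {M : Type*} [AddCommGroup M] {m : ℕ} {h : ℕ → M}

/-- The `m`-antiperiodic sequence that agrees with `h` at the indices below `m`. -/
def antiperiodicExtend (m : ℕ) (h : ℕ → M) (i : ℕ) : M := (-1 : ℤ) ^ (i / m) • h (i % m)

lemma antiperiodic_antiperiodicExtend (hm : 0 < m) (h : ℕ → M) :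
    Function.Antiperiodic (antiperiodicExtend m h) m := fun i ↦ by
  rw [antiperiodicExtend, antiperiodicExtend, Nat.add_div_right i hm, Nat.add_mod_right, pow_succ,
    mul_neg_one, neg_smul]

lemma antiperiodicExtend_of_lt {i : ℕ} (hi : i < m) : antiperiodicExtend m h i = h i := by
  rw [antiperiodicExtend, Nat.div_eq_of_lt hi, Nat.mod_eq_of_lt hi, pow_zero, one_smul]

lemma antiperiodicExtend_of_le (hm : 0 < m) (hclose : h m = -h 0) {i : ℕ} (hi : i ≤ m) :
    antiperiodicExtend m h i = h i := by
  obtain rfl | hlt := hi.eq_or_lt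
  · rw [(antiperiodic_antiperiodicExtend hm h).eq, antiperiodicExtend_of_lt hm, hclose]
  · exact antiperiodicExtend_of_lt hlt

lemma antiperiodicExtend_mem {N : AddSubgroup M} (hm : 0 < m) (hN : ∀ i < m, h i ∈ N) (i : ℕ) :
    antiperiodicExtend m h i ∈ N :=
  zsmul_mem (hN _ (Nat.mod_lt i hm)) _

lemma map_antiperiodicExtend_range_two_mul (hm : 0 < m) (h : ℕ → M) :
    (List.range (2 * m)).map (antiperiodicExtend m h) =
      (List.range m).map h ++ (List.range m).map (-h) := by
  rw [two_mul, List.range_add, List.map_append, List.map_map]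
  congr 1 <;> refine List.map_congr_left fun i hi ↦ ?_
  · exact antiperiodicExtend_of_lt (List.mem_range.1 hi)
  · rw [Function.comp_apply, add_comm, antiperiodic_antiperiodicExtend hm,
      antiperiodicExtend_of_lt (List.mem_range.1 hi), Pi.neg_apply]

end AntiperiodicExtension

section PlanarExtension

variable {m : ℕ} {h : ℕ → Vr 2}

lemma isHalfTurn_antiperiodicExtend (hm : 2 ≤ m)
    (hdet : ∀ i j, i < j → j < m → 0 < planarDet (h i) (h j)) :
    IsHalfTurn m (antiperiodicExtend m h) where
  two_le := hm
  antiperiodic := antiperiodic_antiperiodicExtend (two_pos.trans_le hm) h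
  det_pos_of_lt i j hij hj := by
    rw [antiperiodicExtend_of_lt (hij.trans hj), antiperiodicExtend_of_lt hj]
    exact hdet i j hij hj

lemma planarDet_antiperiodicExtend_succ {c : ℝ} (hm : 0 < m) (hclose : h m = -h 0)
    (hdet : ∀ i < m, planarDet (h i) (h (i + 1)) = c) (i : ℕ) :
    planarDet (antiperiodicExtend m h i) (antiperiodicExtend m h (i + 1)) = c := by
  have hi : i % m < m := Nat.mod_lt i hm
  rw [← (periodic_planarDet (antiperiodic_antiperiodicExtend hm h) 1).map_mod_nat i,
    antiperiodicExtend_of_lt hi, antiperiodicExtend_of_le hm hclose hi]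
  exact hdet _ hi

lemma fanOfList_append_map_neg (hm : 0 < m) (h : ℕ → Vr 2) :
    fanOfList ((List.range m).map h ++ (List.range m).map (-h)) =
      simplicialFan (Set.range (adjacentPair (antiperiodicExtend m h))) := by
  rw [← map_antiperiodicExtend_range_two_mul hm]
  exact fanOfList_map_range (antiperiodic_antiperiodicExtend hm h).periodic_two_mul
    (Nat.mul_pos two_pos hm)

lemma smoothCone_of_planarDet_succ_eq_one {w : ℕ → Vr 2} (hw : ∀ i, w i ∈ stdLat)
    (hdet : ∀ i, planarDet (w i) (w (i + 1)) = 1) {σ : Set (Vr 2)}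
    (hσ : σ ∈ simplicialFan (Set.range (adjacentPair w))) : SmoothCone stdLat σ := by
  refine smoothCone_of_mem_simplicialFan ?_ hσ
  rintro _ ⟨i, rfl⟩
  exact ⟨2, _, isZBasis_stdLat (hw i) (hw (i + 1)) (hdet i), by
    simp [adjacentPair, Set.insert_subset_iff]⟩

end PlanarExtension

section Hirzebruch

variable {n : ℕ} {q : ℕ → ℕ}

/-- The rays `(1, 0), (0, 1), (-1, q 0), (-1, q 1), …` in the half plane from `(1, 0)` to
`(-1, 0)`. Their first `n + 2` members and the negatives of these are the rays of `Σ_C` for `n = 1`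
and `q 0 = a`, and those of its desingularization for `n = a` and `q k = a - k`. -/
def hirzHalf (q : ℕ → ℕ) : ℕ → Vr 2
  | 0 => ![1, 0]
  | 1 => ![0, 1]
  | k + 2 => ![-1, q k]

lemma hirzHalf_mem_stdLat (q : ℕ → ℕ) (i : ℕ) : hirzHalf q i ∈ stdLat := by
  refine mem_stdLat.2 (Fin.forall_fin_two.2 ?_)
  match i with
  | 0 => exact ⟨⟨1, by simp [hirzHalf]⟩, ⟨0, by simp [hirzHalf]⟩⟩
  | 1 => exact ⟨⟨0, by simp [hirzHalf]⟩, ⟨1, by simp [hirzHalf]⟩⟩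
  | k + 2 => exact ⟨⟨-1, by simp [hirzHalf]⟩, ⟨q k, by simp [hirzHalf]⟩⟩

/-- The `2 * n + 4` rays of `hirzHalf`, continued antiperiodically around the origin. -/
def hirzSeq (n : ℕ) (q : ℕ → ℕ) : ℕ → Vr 2 := antiperiodicExtend (n + 2) (hirzHalf q)

lemma hirzSeq_mem_stdLat (n : ℕ) (q : ℕ → ℕ) (i : ℕ) : hirzSeq n q i ∈ stdLat :=
  antiperiodicExtend_mem (Nat.succ_pos _) (fun i _ ↦ hirzHalf_mem_stdLat q i) i

lemma isHalfTurn_hirzSeq (hpos : ∀ k < n, 0 < q k) (hanti : StrictAntiOn q (Set.Iio n)) :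
    IsHalfTurn (n + 2) (hirzSeq n q) := by
  refine isHalfTurn_antiperiodicExtend (Nat.le_add_left 2 n) fun i j hij hj ↦ ?_
  match i, j with
  | 0, 1 => simp [planarDet_apply, hirzHalf]
  | 0, l + 2 => simpa [planarDet_apply, hirzHalf] using hpos l (by omega)
  | 1, l + 2 => simp [planarDet_apply, hirzHalf]
  | k + 2, l + 2 =>
    have hlt : q l < q k := hanti (by grind) (by grind) (by omega)
    simpa [planarDet_apply, hirzHalf] using hlt

lemma fanOfList_hirzC (a : ℕ) : fanOfList (hirzC a) =
    simplicialFan (Set.range (adjacentPair (hirzSeq 1 fun _ ↦ a))) := by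
  rw [hirzSeq, ← fanOfList_append_map_neg (Nat.succ_pos _)]
  congr 1
  simp [hirzC, hirzHalf, List.range_succ]

lemma fanOfList_hirzFull (a : ℕ) : fanOfList (hirzFull a) =
    simplicialFan (Set.range (adjacentPair (hirzSeq a fun k ↦ a - k))) := by
  rw [hirzSeq, ← fanOfList_append_map_neg (Nat.succ_pos _)]
  congr 1
  simp [hirzFull, hirzHalf, List.range_succ_eq_map, Function.comp_def]

lemma planarDet_hirzSeq_succ (a i : ℕ) :
    planarDet (hirzSeq a (fun k ↦ a - k) i) (hirzSeq a (fun k ↦ a - k) (i + 1)) = 1 := by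
  refine planarDet_antiperiodicExtend_succ (Nat.succ_pos _) ?_ (fun i hi ↦ ?_) i
  · simp [hirzHalf]
  match i with
  | 0 => simp [planarDet_apply, hirzHalf]
  | 1 => simp [planarDet_apply, hirzHalf]
  | k + 2 =>
    have hk : a - k = a - (k + 1) + 1 := by omega
    simp [planarDet_apply, hirzHalf, hk]

/-- The lattice point `(-1, 1)` is the fraction `1 / a` of `(-1, a) + (a - 1) • (-1, 0)`. -/
lemma not_smoothCone_hirzC {a : ℕ} (ha : 2 ≤ a) :
    ¬ SmoothCone stdLat (coneGen {![-1, (a : ℝ)], ![-1, 0]}) := by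
  have hmem (n : ℕ) : ![-1, (n : ℝ)] ∈ stdLat := hirzHalf_mem_stdLat (fun _ ↦ n) 2
  have hu : IsPrimitive stdLat ![-1, (a : ℝ)] := isPrimitive_stdLat (hmem a) (i := 0) (by simp)
  have hv : IsPrimitive stdLat ![-1, 0] :=
    isPrimitive_stdLat (by simpa using hmem 0) (i := 0) (by simp)
  have hx : ![-1, 1] ∈ stdLat := by simpa using hmem 1
  have hdet : planarDet ![-1, (a : ℝ)] ![-1, 0] ≠ 0 := by
    simpa [planarDet_apply] using (two_pos.trans_le ha).ne'
  refine not_smoothCone_coneGen_pair (linearIndependent_pair_of_planarDet_ne_zero hdet) hu hv hx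
    ha (c := a - 1) ?_
  ext i
  fin_cases i
  · simp only [Fin.zero_eta, Pi.smul_apply, Pi.add_apply, Matrix.cons_val_zero, smul_eq_mul]
    ring
  · simp

lemma coneGen_mem_fanOfList_hirzC (a : ℕ) :
    coneGen {![-1, (a : ℝ)], ![-1, 0]} ∈ fanOfList (hirzC a) :=
  Or.inr ⟨⟨2, by simp [hirzC]⟩, rfl⟩

end Hirzebruch

/-- for the Hirzebruch surface `F_a`, `a ≥ 2`: the fan `Σ_C` obtained
by adding the rays through `(−1,0)` and `(1,−a)` is a complete centrally symmetric
fan which is not smooth; after inserting the further pairs of rays through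
`±(1,−ν)`, `1 ≤ ν < a`, one obtains a smooth complete centrally symmetric fan. -/
theorem stmt19 (a : ℕ) (ha : 2 ≤ a) :
    (IsFan stdLat (fanOfList (hirzC a)) ∧ FanComplete (fanOfList (hirzC a)) ∧
      CSymm (fanOfList (hirzC a)) ∧
      ¬ ∀ σ ∈ fanOfList (hirzC a), SmoothCone stdLat σ) ∧
    (IsFan stdLat (fanOfList (hirzFull a)) ∧ FanComplete (fanOfList (hirzFull a)) ∧
      CSymm (fanOfList (hirzFull a)) ∧
      (∀ σ ∈ fanOfList (hirzFull a), SmoothCone stdLat σ) ∧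
      { s ∈ fanOfList (hirzFull a) | spanDim s = 1 }.ncard = 2 * a + 4) := by
  have hC : IsHalfTurn 3 (hirzSeq 1 fun _ ↦ a) :=
    isHalfTurn_hirzSeq (fun _ _ ↦ by omega) fun k (_ : k < 1) l (_ : l < 1) _ ↦ by omega
  have hFull : IsHalfTurn (a + 2) (hirzSeq a fun k ↦ a - k) :=
    isHalfTurn_hirzSeq (fun k (hk : k < a) ↦ by omega)
      fun k _ l (hl : l < a) (hkl : k < l) ↦ by omega
  have hnot : ¬ ∀ σ ∈ fanOfList (hirzC a), SmoothCone stdLat σ := fun h ↦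
    not_smoothCone_hirzC ha (h _ (coneGen_mem_fanOfList_hirzC a))
  rw [fanOfList_hirzC] at hnot ⊢
  rw [fanOfList_hirzFull]
  exact ⟨⟨hC.isFan (hirzSeq_mem_stdLat _ _), hC.fanComplete, hC.cSymm, hnot⟩,
    hFull.isFan (hirzSeq_mem_stdLat _ _), hFull.fanComplete, hFull.cSymm,
    fun σ hσ ↦ smoothCone_of_planarDet_succ_eq_one (hirzSeq_mem_stdLat _ _)
      (planarDet_hirzSeq_succ a) hσ,
    by rw [hFull.ncard_rays, mul_add]⟩
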